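/- Let n ≥ 3 be a convex polygon's number of vertices, and let P be the 2n-point configuration consisting of the n vertices of a regular n-gon together with n points placed inside the polygon infinitesimally close to the midpoints of its n edges (generically, so that the configuration is generic). Then for two adjacent polygon vertices P,Q with S the near-midpoint of edge [P,Q]: n(P,Q) = 2n−1. Consequently P ∼ Q under the Orchard relation of the 2n-point configuration. -/

import Mathlib

open scoped Classical

noncomputable section

/-- Orientation determinant of two vectors in the plane. -/
def det2 (u v : ℝ × ℝ) : ℝ := u.1 * v.2 - u.2 * v.1

/-- The line through `A` and `B` separates the points `P` and `Q`
(they lie in distinct open half-planes determined by the line). -/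
def SepLine (A B P Q : ℝ × ℝ) : Prop :=
  det2 (B - A) (P - A) * det2 (B - A) (Q - A) < 0

/-- A finite planar point set is a generic configuration if no three of its
points are collinear. -/
def Generic (C : Finset (ℝ × ℝ)) : Prop :=
  ∀ a ∈ C, ∀ b ∈ C, ∀ c ∈ C, a ≠ b → a ≠ c → b ≠ c →
    ¬ Collinear ℝ ({a, b, c} : Set (ℝ × ℝ))

/-- `nsep C P Q` is the number of lines spanned by (unordered) pairs of points of
`C \ {P,Q}` that separate `P` from `Q`. -/
def nsep (C : Finset (ℝ × ℝ)) (P Q : ℝ × ℝ) : ℕ :=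
  (((C \ {P, Q}).powersetCard 2).filter
    (fun s => ∃ A ∈ s, ∃ B ∈ s, A ≠ B ∧ SepLine A B P Q)).card

/-- The Orchard relation: `P ∼ Q` iff `n(P,Q) ≡ n - 3 (mod 2)` where `n = |C|`. -/
def Orchard (C : Finset (ℝ × ℝ)) (P Q : ℝ × ℝ) : Prop :=
  (nsep C P Q : ℤ) ≡ (C.card : ℤ) - 3 [ZMOD 2]

/-- A configuration is monochromatic if all its points are Orchard-equivalent. -/
def Mono (C : Finset (ℝ × ℝ)) : Prop :=
  ∀ P ∈ C, ∀ Q ∈ C, P ≠ Q → Orchard C P Q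

/-- A configuration is in convex position if each of its points is a vertex of
the convex hull. -/
def ConvexPos (C : Finset (ℝ × ℝ)) : Prop :=
  ∀ P ∈ C, P ∉ convexHull ℝ ((C : Set (ℝ × ℝ)) \ {P})

/-- The `k`-th vertex of the regular `n`-gon inscribed in the unit circle
centered at the origin. -/
def vtx (n : ℕ) (k : Fin n) : ℝ × ℝ :=
  (Real.cos (2 * Real.pi * k / n), Real.sin (2 * Real.pi * k / n))

/-- The configuration consisting of the vertices of the regular `n`-gon together
with its barycenter (the origin). -/
def ngonWithCenter (n : ℕ) : Finset (ℝ × ℝ) :=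
  insert ((0, 0) : ℝ × ℝ) (Finset.image (vtx n) Finset.univ)

/-- The signed doubled area of the triangle `a b c`. -/
def orient (a b c : ℝ × ℝ) : ℝ := det2 (b - a) (c - a)

theorem orient_eq (a b c : ℝ × ℝ) :
    orient a b c = (b.1 - a.1) * (c.2 - a.2) - (b.2 - a.2) * (c.1 - a.1) := rfl

theorem orient_rotate (a b c : ℝ × ℝ) : orient a b c = orient b c a := by
  simp only [orient_eq]; ring

theorem orient_swap (a b c : ℝ × ℝ) : orient a b c = -orient b a c := by
  simp only [orient_eq]; ring

theorem orient_midpoint_left (a a' b c : ℝ × ℝ) :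
    orient (midpoint ℝ a a') b c = (orient a b c + orient a' b c) / 2 := by
  simp only [orient_eq, midpoint_eq_smul_add, Prod.smul_fst, Prod.smul_snd, Prod.fst_add,
    Prod.snd_add, smul_eq_mul, invOf_eq_inv]
  ring

theorem orient_midpoint_middle (a b b' c : ℝ × ℝ) :
    orient a (midpoint ℝ b b') c = (orient a b c + orient a b' c) / 2 := by
  rw [orient_rotate, orient_midpoint_left, ← orient_rotate a b c, ← orient_rotate a b' c]

theorem orient_midpoint_right (a b c c' : ℝ × ℝ) :
    orient a b (midpoint ℝ c c') = (orient a b c + orient a b c') / 2 := by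
  rw [orient_rotate, orient_midpoint_middle, ← orient_rotate a b c, ← orient_rotate a b c']

theorem sepLine_iff (A B P Q : ℝ × ℝ) :
    SepLine A B P Q ↔ orient P A B * orient Q A B < 0 := by
  rw [orient_rotate P, orient_rotate Q]; rfl

theorem SepLine.symm {A B P Q : ℝ × ℝ} (h : SepLine A B P Q) : SepLine B A P Q := by
  have h' : orient A B P * orient A B Q < 0 := h
  rw [orient_swap A B P, orient_swap A B Q, neg_mul_neg] at h'
  exact h'

section Count

/-- Orientation pattern of `2 n` points, numbered along the boundary of a convex polygon with the
vertices at even numbers, after every odd point has been pushed into the polygon; only the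
triples involving the first edge (points `0`, `1`, `2`) are recorded. -/
structure EdgePattern (n : ℕ) (z : ℕ → ℝ × ℝ) : Prop where
  left : ∀ b, 3 ≤ b → b < 2 * n → 0 < orient (z 0) (z 1) (z b)
  right : ∀ b, 3 ≤ b → b < 2 * n → 0 < orient (z 1) (z 2) (z b)
  zero : ∀ a b, 3 ≤ a → a < b → b < 2 * n → a ≠ 2 * n - 2 → 0 < orient (z 0) (z a) (z b)
  two : ∀ a b, 3 ≤ a → a < b → b < 2 * n → b ≠ 4 → 0 < orient (z 2) (z a) (z b)
  zero_last : orient (z 0) (z (2 * n - 2)) (z (2 * n - 1)) < 0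
  two_first : orient (z 2) (z 3) (z 4) < 0

variable {n : ℕ} {z : ℕ → ℝ × ℝ}

theorem EdgePattern.ne (h : EdgePattern n z) (hn : 3 ≤ n) {a b : ℕ} (hab : a < b)
    (hb : b < 2 * n) : z a ≠ z b := by
  intro e
  have l3 := h.left 3 le_rfl (by omega)
  have r3 := h.right 3 le_rfl (by omega)
  rcases Nat.lt_or_ge b 3 with hb3 | hb3
  · have : (a = 0 ∧ b = 1) ∨ (a = 0 ∧ b = 2) ∨ (a = 1 ∧ b = 2) := by omega
    rcases this with ⟨rfl, rfl⟩ | ⟨rfl, rfl⟩ | ⟨rfl, rfl⟩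
    · simp [e, orient_eq] at l3
    · rw [e, orient_swap] at l3; linarith
    · simp [e, orient_eq] at r3
  · have lb := h.left b hb3 hb
    have rb := h.right b hb3 hb
    rcases Nat.lt_or_ge a 3 with ha3 | ha3
    · have : a = 0 ∨ a = 1 ∨ a = 2 := by omega
      rcases this with rfl | rfl | rfl
      · simp [e, orient_eq] at lb
      · simp [e, orient_eq] at rb
      · rw [e] at rb; simp only [orient_eq] at rb; linarith
    · by_cases hl : a = 2 * n - 2
      · have hb' : b = 2 * n - 1 := by omega
        have := h.zero_last
        rw [← hl, ← hb', e] at this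
        simp only [orient_eq] at this; linarith
      · have := h.zero a b ha3 hab hb hl
        rw [e] at this
        simp only [orient_eq] at this; linarith

theorem EdgePattern.injOn (h : EdgePattern n z) (hn : 3 ≤ n) :
    Set.InjOn z (Finset.range (2 * n)) := by
  intro a ha b hb e
  simp only [Finset.coe_range, Set.mem_Iio] at ha hb
  rcases lt_trichotomy a b with hab | hab | hab
  · exact absurd e (h.ne hn hab hb)
  · exact hab
  · exact absurd e.symm (h.ne hn hab ha)

/-- The index pairs whose lines separate the points `0` and `2` in an `EdgePattern`. -/
def sepPairs (n : ℕ) : Finset (ℕ × ℕ) :=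
  (Finset.Ico 3 (2 * n)).image (fun b => (1, b)) ∪ {(3, 4), (2 * n - 2, 2 * n - 1)}

theorem mem_sepPairs {a b : ℕ} : (a, b) ∈ sepPairs n ↔
    (a = 1 ∧ 3 ≤ b ∧ b < 2 * n) ∨ (a = 3 ∧ b = 4) ∨ (a = 2 * n - 2 ∧ b = 2 * n - 1) := by
  simp only [sepPairs, Finset.mem_union, Finset.mem_image, Finset.mem_Ico, Finset.mem_insert,
    Finset.mem_singleton, Prod.mk.injEq]
  constructor
  · rintro (⟨c, hc, rfl, rfl⟩ | h)
    · exact Or.inl ⟨rfl, hc⟩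
    · exact Or.inr h
  · rintro (⟨rfl, hc⟩ | h)
    · exact Or.inl ⟨b, hc, rfl, rfl⟩
    · exact Or.inr h

theorem card_sepPairs (hn : 3 ≤ n) : (sepPairs n).card = 2 * n - 1 := by
  rw [sepPairs, Finset.card_union_of_disjoint, Finset.card_image_of_injective,
    Finset.card_pair, Nat.card_Ico]
  · omega
  · simp only [ne_eq, Prod.mk.injEq]; omega
  · intro a b h; simpa using h
  · rw [Finset.disjoint_left]
    simp only [Finset.mem_image, Finset.mem_insert, Finset.mem_singleton]
    rintro _ ⟨c, -, rfl⟩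
    simp only [Prod.mk.injEq]
    omega

theorem EdgePattern.sepLine_iff_mem (h : EdgePattern n z) (hn : 3 ≤ n) {a b : ℕ} (hab : a < b)
    (hb : b < 2 * n) (ha0 : a ≠ 0) (ha2 : a ≠ 2) (hb2 : b ≠ 2) :
    SepLine (z a) (z b) (z 0) (z 2) ↔ (a, b) ∈ sepPairs n := by
  rw [sepLine_iff, mem_sepPairs]
  rcases Nat.lt_or_ge a 3 with ha3 | ha3
  · obtain rfl : a = 1 := by omega
    have lb := h.left b (by omega) hb
    have rb := h.right b (by omega) hb
    rw [orient_swap] at rb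
    refine iff_of_true (mul_neg_of_pos_of_neg lb (by linarith)) (Or.inl ⟨rfl, by omega, hb⟩)
  · by_cases hl : a = 2 * n - 2
    · obtain rfl : b = 2 * n - 1 := by omega
      have h2 := h.two a _ ha3 hab hb (by omega)
      have h0 := h.zero_last
      rw [← hl] at h0
      exact iff_of_true (mul_neg_of_neg_of_pos h0 h2) (Or.inr (Or.inr ⟨hl, rfl⟩))
    · have h0 := h.zero a b ha3 hab hb hl
      by_cases h4 : b = 4
      · obtain rfl : a = 3 := by omega
        subst h4
        exact iff_of_true (mul_neg_of_pos_of_neg h0 h.two_first) (Or.inr (Or.inl ⟨rfl, rfl⟩))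
      · have h2 := h.two a b ha3 hab hb h4
        refine iff_of_false (not_lt.2 (mul_pos h0 h2).le) ?_
        omega

theorem EdgePattern.nsep_eq (h : EdgePattern n z) (hn : 3 ≤ n) :
    nsep (Finset.image z (Finset.range (2 * n))) (z 0) (z 2) = 2 * n - 1 := by
  have inj := h.injOn hn
  have inj' : ∀ {a b}, a < 2 * n → b < 2 * n → z a = z b → a = b := fun ha hb e =>
    inj (by simpa using ha) (by simpa using hb) e
  have key : ((Finset.image z (Finset.range (2 * n)) \ {z 0, z 2}).powersetCard 2).filter
      (fun s => ∃ A ∈ s, ∃ B ∈ s, A ≠ B ∧ SepLine A B (z 0) (z 2)) =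
      (sepPairs n).image (fun p => {z p.1, z p.2}) := by
    ext s
    simp only [Finset.mem_filter, Finset.mem_powersetCard, Finset.mem_image]
    constructor
    · rintro ⟨⟨hs, hc⟩, A, hA, B, hB, hAB, hsep⟩
      have hsAB : s = {A, B} := by
        symm
        apply Finset.eq_of_subset_of_card_le
        · intro x hx
          simp only [Finset.mem_insert, Finset.mem_singleton] at hx
          rcases hx with rfl | rfl <;> assumption
        · rw [hc, Finset.card_pair hAB]
      have hA' := hs hA
      have hB' := hs hB
      simp only [Finset.mem_sdiff, Finset.mem_image, Finset.mem_range, Finset.mem_insert,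
        Finset.mem_singleton, not_or] at hA' hB'
      obtain ⟨⟨a, ha, rfl⟩, ha0, ha2⟩ := hA'
      obtain ⟨⟨b, hb, rfl⟩, hb0, hb2⟩ := hB'
      have ha0' : a ≠ 0 := fun e => ha0 (by rw [e])
      have ha2' : a ≠ 2 := fun e => ha2 (by rw [e])
      have hb0' : b ≠ 0 := fun e => hb0 (by rw [e])
      have hb2' : b ≠ 2 := fun e => hb2 (by rw [e])
      rcases lt_trichotomy a b with hab | hab | hab
      · exact ⟨(a, b), (h.sepLine_iff_mem hn hab hb ha0' ha2' hb2').1 hsep, hsAB.symm⟩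
      · exact absurd (by rw [hab]) hAB
      · exact ⟨(b, a), (h.sepLine_iff_mem hn hab ha hb0' hb2' ha2').1 hsep.symm,
          by rw [hsAB, Finset.pair_comm]⟩
    · rintro ⟨⟨a, b⟩, hp, rfl⟩
      have hp' := mem_sepPairs.1 hp
      have hab : a < b := by omega
      have hb : b < 2 * n := by omega
      have hsep := (h.sepLine_iff_mem hn hab hb (by omega) (by omega) (by omega)).2 hp
      have hne := h.ne hn hab hb
      refine ⟨⟨?_, Finset.card_pair hne⟩, z a, by simp, z b, by simp, hne, hsep⟩
      intro x hx
      simp only [Finset.mem_insert, Finset.mem_singleton] at hx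
      simp only [Finset.mem_sdiff, Finset.mem_image, Finset.mem_range, Finset.mem_insert,
        Finset.mem_singleton, not_or]
      rcases hx with rfl | rfl
      · refine ⟨⟨a, by omega, rfl⟩, fun e => ?_, fun e => ?_⟩
        · have := inj' (by omega) (by omega) e; omega
        · have := inj' (by omega) (by omega) e; omega
      · refine ⟨⟨b, by omega, rfl⟩, fun e => ?_, fun e => ?_⟩
        · have := inj' (by omega) (by omega) e; omega
        · have := inj' (by omega) (by omega) e; omega
  rw [nsep, key, Finset.card_image_of_injOn, card_sepPairs hn]
  rintro ⟨a, b⟩ hp ⟨c, d⟩ hq e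
  have hp' := mem_sepPairs.1 (Finset.mem_coe.1 hp)
  have hq' := mem_sepPairs.1 (Finset.mem_coe.1 hq)
  have e' : ({z a, z b} : Finset (ℝ × ℝ)) = {z c, z d} := e
  have h1 : z a = z c ∨ z a = z d := by
    have : z a ∈ ({z c, z d} : Finset (ℝ × ℝ)) := by rw [← e']; simp
    simpa using this
  have h2 : z b = z c ∨ z b = z d := by
    have : z b ∈ ({z c, z d} : Finset (ℝ × ℝ)) := by rw [← e']; simp
    simpa using this
  have h1' : a = c ∨ a = d :=
    h1.imp (inj' (by omega) (by omega)) (inj' (by omega) (by omega))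
  have h2' : b = c ∨ b = d :=
    h2.imp (inj' (by omega) (by omega)) (inj' (by omega) (by omega))
  rw [Prod.mk.injEq]
  omega

end Count

section Polygon

theorem orient_circle (x y t : ℝ) :
    orient (Real.cos (2 * x), Real.sin (2 * x)) (Real.cos (2 * y), Real.sin (2 * y))
      (Real.cos (2 * t), Real.sin (2 * t)) =
      4 * Real.sin (y - x) * Real.sin (t - y) * Real.sin (t - x) := by
  have h1 : orient (Real.cos (2 * x), Real.sin (2 * x)) (Real.cos (2 * y), Real.sin (2 * y))
      (Real.cos (2 * t), Real.sin (2 * t)) = Real.sin (2 * y - 2 * x) + Real.sin (2 * t - 2 * y)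
        - Real.sin (2 * t - 2 * x) := by
    simp only [orient_eq, Real.sin_sub]; ring
  obtain ⟨p, rfl⟩ : ∃ p, y = x + p := ⟨y - x, by ring⟩
  obtain ⟨q, rfl⟩ : ∃ q, t = x + p + q := ⟨t - (x + p), by ring⟩
  rw [h1, show 2 * (x + p) - 2 * x = 2 * p by ring,
    show 2 * (x + p + q) - 2 * (x + p) = 2 * q by ring,
    show 2 * (x + p + q) - 2 * x = 2 * p + 2 * q by ring, show x + p - x = p by ring,
    show x + p + q - (x + p) = q by ring, show x + p + q - x = p + q by ring]
  have c : ∀ s : ℝ, Real.cos (2 * s) = 1 - 2 * Real.sin s ^ 2 := fun s => by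
    rw [Real.cos_two_mul, Real.cos_sq']; ring
  rw [Real.sin_add (2 * p), Real.sin_add p, c, c, Real.sin_two_mul, Real.sin_two_mul]
  ring

variable {n : ℕ} [NeZero n]

theorem vtx_add_ofNat (k : Fin n) (j : ℕ) :
    vtx n (k + Fin.ofNat n j) = (Real.cos (2 * (Real.pi * (k + j) / n)),
      Real.sin (2 * (Real.pi * (k + j) / n))) := by
  have hn : (n : ℝ) ≠ 0 := Nat.cast_ne_zero.2 (NeZero.ne n)
  have hv : ((k + Fin.ofNat n j : Fin n) : ℕ) = (k + j) % n := by
    simp [Fin.val_add]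
  have hd : (((k + j) % n : ℕ) : ℝ) + n * (((k + j) / n : ℕ) : ℝ) = k + j := by
    exact_mod_cast Nat.mod_add_div (k + j) n
  have ha : 2 * (Real.pi * (k + j) / n) =
      2 * Real.pi * (((k + j) % n : ℕ) : ℝ) / n + (((k + j) / n : ℕ) : ℝ) * (2 * Real.pi) := by
    rw [← hd]; field_simp
  rw [vtx, hv, ha, Real.cos_add_nat_mul_two_pi, Real.sin_add_nat_mul_two_pi]

theorem orient_vtx (k : Fin n) (a b c : ℕ) :
    orient (vtx n (k + Fin.ofNat n a)) (vtx n (k + Fin.ofNat n b)) (vtx n (k + Fin.ofNat n c)) =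
      4 * Real.sin (Real.pi * (b - a) / n) * Real.sin (Real.pi * (c - b) / n) *
        Real.sin (Real.pi * (c - a) / n) := by
  simp only [vtx_add_ofNat, orient_circle]
  congr 3 <;> ring_nf

theorem orient_vtx_nonneg (k : Fin n) {a b c : ℕ} (hab : a ≤ b) (hbc : b ≤ c) (hca : c ≤ a + n) :
    0 ≤ orient (vtx n (k + Fin.ofNat n a)) (vtx n (k + Fin.ofNat n b))
      (vtx n (k + Fin.ofNat n c)) := by
  have hn : (0 : ℝ) < n := Nat.cast_pos.2 (NeZero.pos n)
  have key : ∀ i j : ℕ, i ≤ j → j ≤ i + n → 0 ≤ Real.sin (Real.pi * (j - i) / n) := by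
    intro i j h1 h2
    have h1' : (i : ℝ) ≤ j := by exact_mod_cast h1
    have h2' : (j : ℝ) ≤ i + n := by exact_mod_cast h2
    apply Real.sin_nonneg_of_nonneg_of_le_pi
    · have := Real.pi_pos
      have := sub_nonneg.2 h1'
      positivity
    · rw [div_le_iff₀ hn]
      exact mul_le_mul_of_nonneg_left (by linarith) Real.pi_pos.le
  rw [orient_vtx]
  have h1 := key a b hab (by omega)
  have h2 := key b c hbc (by omega)
  have h3 := key a c (by omega) hca
  positivity

theorem orient_vtx_pos (k : Fin n) {a b c : ℕ} (hab : a < b) (hbc : b < c) (hca : c < a + n) :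
    0 < orient (vtx n (k + Fin.ofNat n a)) (vtx n (k + Fin.ofNat n b))
      (vtx n (k + Fin.ofNat n c)) := by
  have hn : (0 : ℝ) < n := Nat.cast_pos.2 (NeZero.pos n)
  have key : ∀ i j : ℕ, i < j → j < i + n → 0 < Real.sin (Real.pi * (j - i) / n) := by
    intro i j h1 h2
    have h1' : (i : ℝ) < j := by exact_mod_cast h1
    have h2' : (j : ℝ) < i + n := by exact_mod_cast h2
    apply Real.sin_pos_of_pos_of_lt_pi
    · have := Real.pi_pos
      have := sub_pos.2 h1'
      positivity
    · rw [div_lt_iff₀ hn]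
      exact mul_lt_mul_of_pos_left (by linarith) Real.pi_pos
  rw [orient_vtx]
  have h1 := key a b hab (by omega)
  have h2 := key b c hbc (by omega)
  have h3 := key a c (by omega) hca
  positivity

/-- An interior point of a set lying in a closed half-plane is strictly inside the half-plane. -/
theorem orient_pos_of_mem_interior {s : Set (ℝ × ℝ)} {a b x : ℝ × ℝ} (hab : a ≠ b)
    (hs : ∀ y ∈ s, 0 ≤ orient a b y) (hx : x ∈ interior s) : 0 < orient a b x := by
  set d : ℝ × ℝ := (b.2 - a.2, -(b.1 - a.1)) with hd
  have hc : Filter.Tendsto (fun t : ℝ => x + t • d) (nhds 0) (nhds x) := by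
    have : Continuous fun t : ℝ => x + t • d := by fun_prop
    simpa using this.tendsto 0
  have hev := hc.eventually (mem_interior_iff_mem_nhds.1 hx)
  obtain ⟨ε, hε, h⟩ := Metric.eventually_nhds_iff.1 hev
  have ht := hs _ (h (y := ε / 2) (by
    rw [Real.dist_eq, sub_zero, abs_of_pos (by positivity)]; linarith))
  have hpos : 0 < (b.1 - a.1) ^ 2 + (b.2 - a.2) ^ 2 := by
    by_contra! hle
    apply hab
    ext
    · nlinarith [sq_nonneg (b.1 - a.1), sq_nonneg (b.2 - a.2)]
    · nlinarith [sq_nonneg (b.1 - a.1), sq_nonneg (b.2 - a.2)]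
  have e : orient a b (x + (ε / 2) • d) =
      orient a b x - (ε / 2) * ((b.1 - a.1) ^ 2 + (b.2 - a.2) ^ 2) := by
    simp only [orient_eq, hd, Prod.fst_add, Prod.snd_add, Prod.smul_mk, smul_eq_mul]
    ring
  rw [e] at ht
  have := mul_pos (half_pos hε) hpos
  linarith

theorem convex_orient_nonneg (a b : ℝ × ℝ) : Convex ℝ {x | 0 ≤ orient a b x} := by
  intro x hx y hy s t hs ht hst
  simp only [Set.mem_ofPred_eq] at hx hy ⊢
  have e : orient a b (s • x + t • y) = s * orient a b x + t * orient a b y := by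
    obtain rfl : s = 1 - t := by linarith
    simp only [orient_eq, Prod.fst_add, Prod.snd_add, Prod.smul_fst, Prod.smul_snd, smul_eq_mul]
    ring
  rw [e]
  positivity

theorem exists_add_ofNat (k i : Fin n) : ∃ j < n, i = k + Fin.ofNat n j := by
  refine ⟨(i - k : Fin n), Fin.is_lt _, ?_⟩
  have : Fin.ofNat n ((i - k : Fin n) : ℕ) = i - k := Fin.ofNat_val_eq_self _
  rw [this, add_sub_cancel]

theorem orient_edge_pos (hn : 3 ≤ n) (k : Fin n) (j : ℕ) {x : ℝ × ℝ}
    (hx : x ∈ interior (convexHull ℝ (Set.range (vtx n)))) :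
    0 < orient (vtx n (k + Fin.ofNat n j)) (vtx n (k + Fin.ofNat n (j + 1))) x := by
  have hpos := orient_vtx_pos k (show j < j + 1 by omega) (show j + 1 < j + 2 by omega)
    (show j + 2 < j + n by omega)
  refine orient_pos_of_mem_interior ?_ ?_ hx
  · intro e
    rw [e, orient_eq] at hpos
    linarith
  · refine fun y hy => convexHull_min (t := {y | 0 ≤ orient _ _ y}) ?_ (convex_orient_nonneg _ _) hy
    rintro _ ⟨i, rfl⟩
    obtain ⟨l, hl, e⟩ := exists_add_ofNat (k + Fin.ofNat n j) i
    have e' : i = k + Fin.ofNat n (j + l) := by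
      rw [e, add_assoc]; congr 1; ext; simp [Fin.val_add]
    rw [Set.mem_ofPred_eq, e']
    rcases Nat.eq_zero_or_pos l with rfl | h
    · simp [orient_eq]
    · exact orient_vtx_nonneg k (by omega) (by omega) (by omega)

/-- Vertices (even indices) and points attached to the edges (odd indices) of the regular
`n`-gon, listed along the boundary starting from the `k`-th vertex. -/
def boundaryPt (m : Fin n → ℝ × ℝ) (k : Fin n) (t : ℕ) : ℝ × ℝ :=
  if t % 2 = 0 then vtx n (k + Fin.ofNat n (t / 2)) else m (k + Fin.ofNat n (t / 2))

theorem boundaryPt_two_mul (m : Fin n → ℝ × ℝ) (k : Fin n) (j : ℕ) :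
    boundaryPt m k (2 * j) = vtx n (k + Fin.ofNat n j) := by
  simp [boundaryPt]

theorem boundaryPt_two_mul_add_one (m : Fin n → ℝ × ℝ) (k : Fin n) (j : ℕ) :
    boundaryPt m k (2 * j + 1) = m (k + Fin.ofNat n j) := by
  have h1 : (2 * j + 1) % 2 = 1 := by omega
  have h2 : (2 * j + 1) / 2 = j := by omega
  simp [boundaryPt, h1, h2]

/-- The midpoints of the edges of the regular `n`-gon. -/
def edgeMid (n : ℕ) [NeZero n] (i : Fin n) : ℝ × ℝ := midpoint ℝ (vtx n i) (vtx n (i + 1))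

theorem add_ofNat_succ (k : Fin n) (j : ℕ) :
    k + Fin.ofNat n (j + 1) = k + Fin.ofNat n j + 1 := by
  rw [add_assoc]; congr 1; ext; simp [Fin.val_add]

theorem boundaryPt_edgeMid (k : Fin n) (t : ℕ) : boundaryPt (edgeMid n) k t =
    midpoint ℝ (vtx n (k + Fin.ofNat n (t / 2))) (vtx n (k + Fin.ofNat n ((t + 1) / 2))) := by
  rcases Nat.even_or_odd' t with ⟨j, rfl | rfl⟩
  · rw [boundaryPt_two_mul, show 2 * j / 2 = j by omega, show (2 * j + 1) / 2 = j by omega,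
      midpoint_self]
  · rw [boundaryPt_two_mul_add_one, show (2 * j + 1) / 2 = j by omega,
      show (2 * j + 1 + 1) / 2 = j + 1 by omega, edgeMid, add_ofNat_succ]

theorem image_boundaryPt (m : Fin n → ℝ × ℝ) (k : Fin n) :
    Finset.image (boundaryPt m k) (Finset.range (2 * n)) =
      Finset.image (vtx n) Finset.univ ∪ Finset.image m Finset.univ := by
  ext x
  simp only [Finset.mem_image, Finset.mem_range, Finset.mem_union, Finset.mem_univ, true_and]
  constructor
  · rintro ⟨t, -, rfl⟩
    rw [boundaryPt]
    split_ifs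
    · exact Or.inl ⟨_, rfl⟩
    · exact Or.inr ⟨_, rfl⟩
  · rintro (⟨i, rfl⟩ | ⟨i, rfl⟩) <;> obtain ⟨j, hj, rfl⟩ := exists_add_ofNat k i
    · exact ⟨2 * j, by omega, boundaryPt_two_mul m k j⟩
    · exact ⟨2 * j + 1, by omega, boundaryPt_two_mul_add_one m k j⟩

theorem orient_zero_edgeMid_pos (k : Fin n) {a b : ℕ} (ha : 2 ≤ a) (hab : a < b)
    (hb : b < 2 * n) (hl : a ≠ 2 * n - 2) :
    0 < orient (boundaryPt (edgeMid n) k 0) (boundaryPt (edgeMid n) k a)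
      (boundaryPt (edgeMid n) k b) := by
  have h0 : boundaryPt (edgeMid n) k 0 = vtx n (k + Fin.ofNat n 0) := boundaryPt_two_mul _ k 0
  rw [h0, boundaryPt_edgeMid k a, boundaryPt_edgeMid k b]
  simp only [orient_midpoint_middle, orient_midpoint_right]
  have h1 := orient_vtx_nonneg k (a := 0) (b := a / 2) (c := b / 2)
    (by omega) (by omega) (by omega)
  have h2 := orient_vtx_nonneg k (a := 0) (b := a / 2) (c := (b + 1) / 2)
    (by omega) (by omega) (by omega)
  have h3 : 0 ≤ orient (vtx n (k + Fin.ofNat n 0)) (vtx n (k + Fin.ofNat n ((a + 1) / 2)))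
      (vtx n (k + Fin.ofNat n (b / 2))) :=
    orient_vtx_nonneg k (by omega) (by omega) (by omega)
  have h4 := orient_vtx_nonneg k (a := 0) (b := (a + 1) / 2) (c := (b + 1) / 2)
    (by omega) (by omega) (by omega)
  rcases Nat.lt_or_ge (a / 2) (b / 2) with h | h
  · have := orient_vtx_pos k (a := 0) (b := a / 2) (c := b / 2)
      (by omega) (by omega) (by omega)
    linarith
  · have := orient_vtx_pos k (a := 0) (b := a / 2) (c := (b + 1) / 2)
      (by omega) (by omega) (by omega)
    linarith

theorem orient_two_edgeMid_pos (k : Fin n) {a b : ℕ} (ha : 3 ≤ a) (hab : a < b)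
    (hb : b ≤ 2 * n) (h4 : b ≠ 4) :
    0 < orient (boundaryPt (edgeMid n) k 2) (boundaryPt (edgeMid n) k a)
      (boundaryPt (edgeMid n) k b) := by
  have h0 : boundaryPt (edgeMid n) k 2 = vtx n (k + Fin.ofNat n 1) := boundaryPt_two_mul _ k 1
  rw [h0, boundaryPt_edgeMid k a, boundaryPt_edgeMid k b]
  simp only [orient_midpoint_middle, orient_midpoint_right]
  have h1 := orient_vtx_nonneg k (a := 1) (b := a / 2) (c := b / 2)
    (by omega) (by omega) (by omega)
  have h2 := orient_vtx_nonneg k (a := 1) (b := a / 2) (c := (b + 1) / 2)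
    (by omega) (by omega) (by omega)
  have h3 : 0 ≤ orient (vtx n (k + Fin.ofNat n 1)) (vtx n (k + Fin.ofNat n ((a + 1) / 2)))
      (vtx n (k + Fin.ofNat n (b / 2))) :=
    orient_vtx_nonneg k (by omega) (by omega) (by omega)
  have h5 := orient_vtx_nonneg k (a := 1) (b := (a + 1) / 2) (c := (b + 1) / 2)
    (by omega) (by omega) (by omega)
  rcases Nat.lt_or_ge ((a + 1) / 2) ((b + 1) / 2) with h | h
  · have := orient_vtx_pos k (a := 1) (b := (a + 1) / 2) (c := (b + 1) / 2)
      (by omega) (by omega) (by omega)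
    linarith
  · have := orient_vtx_pos k (a := 1) (b := a / 2) (c := (b + 1) / 2)
      (by omega) (by omega) (by omega)
    linarith

theorem orient_left_edgeMid_pos (k : Fin n) {b : ℕ} (hb3 : 3 ≤ b) (hb : b < 2 * n) (hn : 3 ≤ n) :
    0 < orient (boundaryPt (edgeMid n) k 0) (boundaryPt (edgeMid n) k 1)
      (boundaryPt (edgeMid n) k b) := by
  have h1 : boundaryPt (edgeMid n) k 1 =
      midpoint ℝ (boundaryPt (edgeMid n) k 0) (boundaryPt (edgeMid n) k 2) := by
    rw [boundaryPt_edgeMid k 1]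
    congr 1
  have h := orient_zero_edgeMid_pos k (a := 2) le_rfl (by omega : 2 < b) hb (by omega)
  have h0 : ∀ x y : ℝ × ℝ, orient x x y = 0 := fun x y => by simp [orient_eq]
  rw [h1, orient_midpoint_middle, h0]
  linarith

theorem orient_right_edgeMid_pos (k : Fin n) {b : ℕ} (hb3 : 3 ≤ b) (hb : b < 2 * n)
    (hn : 3 ≤ n) :
    0 < orient (boundaryPt (edgeMid n) k 1) (boundaryPt (edgeMid n) k 2)
      (boundaryPt (edgeMid n) k b) := by
  have h1 : boundaryPt (edgeMid n) k 1 =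
      midpoint ℝ (boundaryPt (edgeMid n) k 0) (boundaryPt (edgeMid n) k 2) := by
    rw [boundaryPt_edgeMid k 1]
    congr 1
  have h := orient_zero_edgeMid_pos k (a := 2) le_rfl (by omega : 2 < b) hb (by omega)
  have h0 : ∀ x y : ℝ × ℝ, orient x x y = 0 := fun x y => by simp [orient_eq]
  rw [h1, orient_midpoint_left, h0]
  linarith

theorem continuous_boundaryPt (k : Fin n) (t : ℕ) :
    Continuous fun m : Fin n → ℝ × ℝ => boundaryPt m k t := by
  unfold boundaryPt
  split_ifs <;> fun_prop

theorem eventually_orient_boundaryPt_pos (m₀ : Fin n → ℝ × ℝ) (k : Fin n) (a b c : ℕ)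
    (h : 0 < orient (boundaryPt m₀ k a) (boundaryPt m₀ k b) (boundaryPt m₀ k c)) :
    ∀ᶠ m in nhds m₀, 0 < orient (boundaryPt m k a) (boundaryPt m k b) (boundaryPt m k c) := by
  have hc : Continuous fun m : Fin n → ℝ × ℝ =>
      orient (boundaryPt m k a) (boundaryPt m k b) (boundaryPt m k c) := by
    have ha := continuous_boundaryPt k a
    have hb := continuous_boundaryPt k b
    have hc := continuous_boundaryPt k c
    simp only [orient_eq]
    fun_prop
  exact hc.continuousAt.eventually (lt_mem_nhds h)

/-- Every positive orientation in the configuration with the exact edge midpoints persists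
nearby. -/
theorem eventually_forall_orient_pos (n : ℕ) [NeZero n] :
    ∀ᶠ m in nhds (edgeMid n), ∀ k : Fin n, ∀ a ∈ Finset.range (2 * n),
      ∀ b ∈ Finset.range (2 * n), ∀ c ∈ Finset.range (2 * n),
      0 < orient (boundaryPt (edgeMid n) k a) (boundaryPt (edgeMid n) k b)
        (boundaryPt (edgeMid n) k c) →
      0 < orient (boundaryPt m k a) (boundaryPt m k b) (boundaryPt m k c) := by
  simp only [Filter.eventually_all, Filter.eventually_all_finset]
  intro k a _ b _ c _ h
  exact eventually_orient_boundaryPt_pos _ k a b c h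

theorem edgePattern_boundaryPt (hn : 3 ≤ n) {m : Fin n → ℝ × ℝ} (k : Fin n)
    (hpos : ∀ a ∈ Finset.range (2 * n), ∀ b ∈ Finset.range (2 * n), ∀ c ∈ Finset.range (2 * n),
      0 < orient (boundaryPt (edgeMid n) k a) (boundaryPt (edgeMid n) k b)
        (boundaryPt (edgeMid n) k c) →
      0 < orient (boundaryPt m k a) (boundaryPt m k b) (boundaryPt m k c))
    (hint : ∀ i : Fin n, m i ∈ interior (convexHull ℝ (Set.range (vtx n)))) :
    EdgePattern n (boundaryPt m k) := by
  simp only [Finset.mem_range] at hpos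
  refine ⟨fun b h3 hb => ?_, fun b h3 hb => ?_, fun a b ha hab hb hl => ?_,
    fun a b ha hab hb h4 => ?_, ?_, ?_⟩
  · exact hpos _ (by omega) _ (by omega) _ hb (orient_left_edgeMid_pos k h3 hb hn)
  · exact hpos _ (by omega) _ (by omega) _ hb (orient_right_edgeMid_pos k h3 hb hn)
  · exact hpos _ (by omega) _ (by omega) _ hb
      (orient_zero_edgeMid_pos k (by omega) hab hb hl)
  · exact hpos _ (by omega) _ (by omega) _ hb (orient_two_edgeMid_pos k ha hab hb.le h4)
  · have h := orient_edge_pos hn k (n - 1) (hint (k + Fin.ofNat n (n - 1)))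
    have h0 : k + Fin.ofNat n (n - 1 + 1) = k + Fin.ofNat n 0 := by
      congr 1; ext; simp [Nat.sub_add_cancel (NeZero.pos n)]
    have e0 : boundaryPt m k 0 = _ := boundaryPt_two_mul m k 0
    rw [show 2 * n - 2 = 2 * (n - 1) by omega, show 2 * n - 1 = 2 * (n - 1) + 1 by omega,
      boundaryPt_two_mul, boundaryPt_two_mul_add_one, e0]
    rw [h0, orient_swap] at h
    linarith
  · have h := orient_edge_pos hn k 1 (hint (k + Fin.ofNat n 1))
    have e2 : boundaryPt m k 2 = _ := boundaryPt_two_mul m k 1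
    have e3 : boundaryPt m k 3 = _ := boundaryPt_two_mul_add_one m k 1
    have e4 : boundaryPt m k 4 = _ := boundaryPt_two_mul m k 2
    rw [e2, e3, e4, ← orient_rotate, orient_swap]
    linarith

end Polygon

/-- For `n ≥ 3`, consider the `2n`-point configuration formed by the vertices of
a regular `n`-gon together with, for each edge, a point interior to the polygon
infinitesimally close to the midpoint of that edge (in generic position).  Then
for two adjacent polygon vertices `P = vtx n k`, `Q = vtx n (k+1)` one has
`n(P,Q) = 2n - 1`, and consequently `P ∼ Q` under the Orchard relation. -/
theorem midpoint_family_adjacent (n : ℕ) [NeZero n] (hn : 3 ≤ n) :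
    ∃ ε > (0 : ℝ), ∀ m : Fin n → ℝ × ℝ,
      (∀ i : Fin n, dist (m i) (midpoint ℝ (vtx n i) (vtx n (i + 1))) < ε) →
      (∀ i : Fin n, m i ∈ interior (convexHull ℝ (Set.range (vtx n)))) →
      Generic (Finset.image (vtx n) Finset.univ ∪ Finset.image m Finset.univ) →
      ∀ k : Fin n,
        nsep (Finset.image (vtx n) Finset.univ ∪ Finset.image m Finset.univ)
            (vtx n k) (vtx n (k + 1)) = 2 * n - 1 ∧
        Orchard (Finset.image (vtx n) Finset.univ ∪ Finset.image m Finset.univ)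
            (vtx n k) (vtx n (k + 1)) := by
  obtain ⟨ε, hε, h⟩ := Metric.eventually_nhds_iff.1 (eventually_forall_orient_pos n)
  refine ⟨ε, hε, fun m hm hint _ k => ?_⟩
  have hp := edgePattern_boundaryPt hn k (h ((dist_pi_lt_iff hε).2 hm) k) hint
  have e0 : boundaryPt m k 0 = vtx n k := by
    simp [boundaryPt]
  have e2 : boundaryPt m k 2 = vtx n (k + 1) := by
    have h2 : boundaryPt m k 2 = _ := boundaryPt_two_mul m k 1
    rw [h2, add_ofNat_succ]
    simp
  have hsep := hp.nsep_eq hn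
  have hcard := Finset.card_image_of_injOn (hp.injOn hn)
  rw [image_boundaryPt, e0, e2] at hsep
  rw [image_boundaryPt, Finset.card_range] at hcard
  refine ⟨hsep, ?_⟩
  rw [Orchard, hsep, hcard, Int.modEq_iff_dvd]
  omega
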